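/- For every finite simple graph G each of whose connected components has at least two vertices, ℓ(G) ≤ RTD(C_con(G)) ≤ ℓ(G) + 1. -/

import Mathlib

open scoped Classical

noncomputable section

/-! ### Concept classes, VC-dimension, teaching dimension, RTD -/

variable {X : Type*}

/-- A set `S` is shattered by the concept class `𝒞` if every subset of `S`
is the trace on `S` of some concept in `𝒞`. -/
def Shatters [DecidableEq X] (𝒞 : Finset (Finset X)) (S : Finset X) : Prop :=
  ∀ S' ⊆ S, ∃ C ∈ 𝒞, C ∩ S = S'

/-- The VC-dimension of a concept class: the maximum size of a shattered set. -/
def VCD [DecidableEq X] (𝒞 : Finset (Finset X)) : ℕ :=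
  sSup {n | ∃ S : Finset X, Shatters 𝒞 S ∧ S.card = n}

/-- `D` is a teaching set for the concept `C` within the class `𝒞`:
no other concept of `𝒞` agrees with `C` on all of `D`. -/
def IsTeachingSet [DecidableEq X] (𝒞 : Finset (Finset X)) (C D : Finset X) : Prop :=
  ∀ C' ∈ 𝒞, C' ≠ C → ∃ x ∈ D, ¬ ((x ∈ C') ↔ (x ∈ C))

/-- The teaching dimension of the concept `C` within the class `𝒞`:
the minimum size of a teaching set for `C` in `𝒞`. -/
def TD [DecidableEq X] (𝒞 : Finset (Finset X)) (C : Finset X) : ℕ :=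
  sInf {n | ∃ D : Finset X, IsTeachingSet 𝒞 C D ∧ D.card = n}

/-- The minimum teaching dimension over all concepts of the class. -/
def TDmin [DecidableEq X] (𝒞 : Finset (Finset X)) : ℕ :=
  sInf {n | ∃ C ∈ 𝒞, TD 𝒞 C = n}

/-- The recursive teaching dimension: with `𝒞_min` the set of concepts of `𝒞` whose
teaching dimension equals `TDmin 𝒞`, we have `RTD 𝒞 = TDmin 𝒞` if `𝒞 = 𝒞_min`
and `RTD 𝒞 = max (TDmin 𝒞) (RTD (𝒞 \ 𝒞_min))` otherwise. -/
def RTD [DecidableEq X] (𝒞 : Finset (Finset X)) : ℕ :=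
  if h : 𝒞 = 𝒞.filter (fun C => TD 𝒞 C = TDmin 𝒞) then TDmin 𝒞
  else max (TDmin 𝒞) (RTD (𝒞 \ 𝒞.filter (fun C => TD 𝒞 C = TDmin 𝒞)))
termination_by 𝒞.card
decreasing_by
  have hne : 𝒞.Nonempty := by
    rcases Finset.eq_empty_or_nonempty 𝒞 with he | hne
    · exact absurd (by simp [he]) h
    · exact hne
  obtain ⟨C₀, hC₀⟩ := hne
  have hmem : TDmin 𝒞 ∈ {n | ∃ C ∈ 𝒞, TD 𝒞 C = n} :=
    Nat.sInf_mem ⟨TD 𝒞 C₀, C₀, hC₀, rfl⟩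
  obtain ⟨C, hC, hTD⟩ := hmem
  refine Finset.card_lt_card ?_
  refine (Finset.ssubset_iff_of_subset Finset.sdiff_subset).mpr ?_
  exact ⟨C, hC, by simp [Finset.mem_sdiff, Finset.mem_filter, hC, hTD]⟩

/-! ### Graph-theoretic notions -/

/-- The degree of a vertex in a graph on a finite vertex type. -/
def deg {W : Type*} [Fintype W] (T : SimpleGraph W) (v : W) : ℕ :=
  (Finset.univ.filter (fun w => T.Adj v w)).card

/-- A leaf of a graph (in particular, of a tree) is a vertex of degree 1. -/
def IsLeaf {W : Type*} [Fintype W] (T : SimpleGraph W) (v : W) : Prop :=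
  deg T v = 1

/-- The number of leaves of a graph (in particular, of a tree). -/
def leafCount {W : Type*} [Fintype W] (T : SimpleGraph W) : ℕ :=
  (Finset.univ.filter (fun v => IsLeaf T v)).card

variable {V : Type*} [Fintype V] [DecidableEq V]

/-- The open neighborhood of a vertex, as a finset. -/
def nbrFinset (G : SimpleGraph V) (x : V) : Finset V :=
  Finset.univ.filter (fun y => G.Adj x y)

/-- The closed neighborhood of a vertex, as a finset. -/
def closedNbr (G : SimpleGraph V) (x : V) : Finset V :=
  insert x (nbrFinset G x)

/-- The maximum degree `Δ(G)`. -/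
def maxDeg (G : SimpleGraph V) : ℕ :=
  Finset.univ.sup (deg G)

/-- The closed neighborhood of a set of vertices. -/
def closedNbrSet (G : SimpleGraph V) (A : Finset V) : Finset V :=
  A.biUnion (closedNbr G)

/-- The open neighborhood of a set of vertices: `N_G(A) \ A`. -/
def openNbrSet (G : SimpleGraph V) (A : Finset V) : Finset V :=
  closedNbrSet G A \ A

/-- The star class of `G`: all sets `{x} ∪ X` with `X` a set of neighbors of `x`. -/
def Cstar (G : SimpleGraph V) : Finset (Finset V) :=
  Finset.univ.filter (fun C => ∃ x : V, ∃ Y ⊆ nbrFinset G x, C = insert x Y)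

/-- `A` is a connected set of `G`: the induced subgraph `G[A]` is connected. -/
def IsConnSet (G : SimpleGraph V) (A : Finset V) : Prop :=
  (G.induce (A : Set V)).Connected

/-- The class of connected sets of `G` (including the empty set). -/
def Ccon (G : SimpleGraph V) : Finset (Finset V) :=
  Finset.univ.filter (fun A => A = ∅ ∨ IsConnSet G A)

/-- For connected `G`: the maximum number of leaves over all spanning trees of `G`. -/
def ell (G : SimpleGraph V) : ℕ :=
  sSup {k | ∃ T : SimpleGraph V, T ≤ G ∧ T.IsTree ∧ leafCount T = k}

/-- For a general graph `G`: the maximum of `ell` over the connected components of `G`. -/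
def ellGen (G : SimpleGraph V) : ℕ :=
  sSup {k | ∃ c : G.ConnectedComponent, ell (G.induce c.supp) = k}

/-- Every pair of distinct elements of `L` can be connected by a path in `G` which
contains neither `u` nor any element of `L` other than the two endpoints. -/
def ConnectableAvoiding (G : SimpleGraph V) (L : Set V) (u : V) : Prop :=
  ∀ a ∈ L, ∀ b ∈ L, a ≠ b → ∃ p : G.Walk a b, p.IsPath ∧
    ∀ v ∈ p.support, v ≠ u ∧ (v ∈ L → v = a ∨ v = b)

end

/-!
The recursive teaching dimension of `𝒞` is the largest `TDmin 𝒟` over the subclasses `𝒟 ⊆ 𝒞`.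

*Lower bound.* Removing any set of leaves from a spanning tree of a component leaves it connected,
so the connected sets of `G` contain a Boolean interval whose dimension is the number of leaves.
In a Boolean interval of dimension `k` every concept has teaching dimension at least `k`.

*Upper bound.* If `A` is an inclusion-minimal nonempty member of a class of connected sets and
`x ∈ A`, then `{x} ∪ N(A)` is a teaching set for `A`: a connected set containing `x` and avoiding
`N(A)` cannot leave `A`. Moreover `|N(A)| ≤ ℓ(G)`: absorbing boundary vertices one at a time, `A`
grows to a connected dominating set `C` of its component without the neighborhood ever shrinking,
and a spanning tree of `G[C]` with every remaining vertex attached to it has all of them as leaves.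
-/

open Finset

/-! ### Recursive teaching dimension and subclasses -/

section Teaching

variable {X : Type*} [DecidableEq X] {𝒞 𝒟 : Finset (Finset X)} {A B C D : Finset X}

lemma IsTeachingSet.of_subset (hD : IsTeachingSet 𝒞 C D) (h : 𝒟 ⊆ 𝒞) : IsTeachingSet 𝒟 C D :=
  fun C' hC' => hD C' (h hC')

lemma IsTeachingSet.TD_le (hD : IsTeachingSet 𝒞 C D) : TD 𝒞 C ≤ #D :=
  Nat.sInf_le ⟨D, hD, rfl⟩

lemma isTeachingSet_union_biUnion (𝒞 : Finset (Finset X)) (C : Finset X) :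
    IsTeachingSet 𝒞 C (C ∪ 𝒞.biUnion id) := by
  intro C' hC' hne
  obtain ⟨x, hx⟩ := symmDiff_nonempty.2 hne
  rcases mem_symmDiff.1 hx with ⟨hxC', hxC⟩ | ⟨hxC, hxC'⟩
  · exact ⟨x, mem_union_right _ (mem_biUnion.2 ⟨C', hC', hxC'⟩), by simp [hxC', hxC]⟩
  · exact ⟨x, mem_union_left _ hxC, by simp [hxC', hxC]⟩

lemma exists_isTeachingSet_card_eq_TD (𝒞 : Finset (Finset X)) (C : Finset X) :
    ∃ D, IsTeachingSet 𝒞 C D ∧ #D = TD 𝒞 C :=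
  Nat.sInf_mem (s := {n | ∃ D, IsTeachingSet 𝒞 C D ∧ #D = n})
    ⟨_, _, isTeachingSet_union_biUnion 𝒞 C, rfl⟩

lemma TD_mono (h : 𝒟 ⊆ 𝒞) (C : Finset X) : TD 𝒟 C ≤ TD 𝒞 C := by
  obtain ⟨D, hD, hcard⟩ := exists_isTeachingSet_card_eq_TD 𝒞 C
  exact hcard ▸ (hD.of_subset h).TD_le

lemma TDmin_le_TD (hC : C ∈ 𝒞) : TDmin 𝒞 ≤ TD 𝒞 C :=
  Nat.sInf_le ⟨C, hC, rfl⟩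

lemma exists_TD_eq_TDmin (h : 𝒞.Nonempty) : ∃ C ∈ 𝒞, TD 𝒞 C = TDmin 𝒞 := by
  obtain ⟨C, hC⟩ := h
  exact Nat.sInf_mem (s := {n | ∃ C ∈ 𝒞, TD 𝒞 C = n}) ⟨_, C, hC, rfl⟩

lemma TDmin_eq_zero_of_subsingleton (h : (𝒞 : Set (Finset X)).Subsingleton) : TDmin 𝒞 = 0 := by
  rcases 𝒞.eq_empty_or_nonempty with rfl | ⟨C, hC⟩
  · simp [TDmin]
  · have hteach : IsTeachingSet 𝒞 C ∅ := fun C' hC' hne => absurd (h hC' hC) hne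
    exact Nat.le_zero.1 ((TDmin_le_TD hC).trans hteach.TD_le)

lemma TDmin_le_TDmin_of_mem (h : 𝒟 ⊆ 𝒞) (hC : C ∈ 𝒟) (hmin : TD 𝒞 C = TDmin 𝒞) :
    TDmin 𝒟 ≤ TDmin 𝒞 :=
  calc TDmin 𝒟 ≤ TD 𝒟 C := TDmin_le_TD hC
    _ ≤ TD 𝒞 C := TD_mono h C
    _ = TDmin 𝒞 := hmin

theorem TDmin_le_RTD_of_subset (h : 𝒟 ⊆ 𝒞) : TDmin 𝒟 ≤ RTD 𝒞 := by
  fun_induction RTD 𝒞 with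
  | case1 𝒞 hall =>
    rcases 𝒟.eq_empty_or_nonempty with rfl | ⟨C, hC⟩
    · simp [TDmin_eq_zero_of_subsingleton]
    · exact TDmin_le_TDmin_of_mem h hC (filter_eq_self.1 hall.symm C (h hC))
  | case2 𝒞 _ ih =>
    by_cases hex : ∃ C ∈ 𝒟, TD 𝒞 C = TDmin 𝒞
    · obtain ⟨C, hC, hmin⟩ := hex
      exact le_max_of_le_left (TDmin_le_TDmin_of_mem h hC hmin)
    · push Not at hex
      refine le_max_of_le_right (ih fun C hC => ?_)
      simp [h hC, hex C hC]

theorem RTD_le_of_forall_TDmin_le {m : ℕ} (h : ∀ 𝒟 ⊆ 𝒞, TDmin 𝒟 ≤ m) : RTD 𝒞 ≤ m := by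
  fun_induction RTD 𝒞 with
  | case1 𝒞 _ => exact h 𝒞 subset_rfl
  | case2 𝒞 _ ih =>
    exact max_le (h 𝒞 subset_rfl) (ih fun 𝒟 h𝒟 => h 𝒟 (h𝒟.trans sdiff_subset))

lemma IsTeachingSet.sdiff_subset_of_Icc (hD : IsTeachingSet (Icc A B) C D) (hC : C ∈ Icc A B) :
    B \ A ⊆ D := by
  intro x hx
  obtain ⟨hxB, hxA⟩ := mem_sdiff.1 hx
  obtain ⟨hAC, hCB⟩ := mem_Icc.1 hC
  have hflip : symmDiff C {x} ∈ Icc A B := by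
    refine mem_Icc.2 ⟨fun y hy => ?_, fun y hy => ?_⟩
    · have hyx : y ≠ x := fun h => hxA (h ▸ hy)
      simp [mem_symmDiff, hyx, hAC hy]
    · rcases mem_symmDiff.1 hy with ⟨hyC, -⟩ | ⟨hyx, -⟩
      · exact hCB hyC
      · exact mem_singleton.1 hyx ▸ hxB
  obtain ⟨y, hyD, hy⟩ := hD _ hflip (by simp)
  have hyx : y = x := by
    by_contra hne
    simp [mem_symmDiff, hne] at hy
  exact hyx ▸ hyD

lemma card_sdiff_le_TDmin_Icc (hAB : A ⊆ B) : #(B \ A) ≤ TDmin (Icc A B) := by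
  obtain ⟨C, hC, hmin⟩ := exists_TD_eq_TDmin (nonempty_Icc.2 hAB)
  obtain ⟨D, hD, hcard⟩ := exists_isTeachingSet_card_eq_TD (Icc A B) C
  rw [← hmin, ← hcard]
  exact card_le_card (hD.sdiff_subset_of_Icc hC)

theorem card_sdiff_le_RTD_of_Icc_subset (hAB : A ⊆ B) (h : Icc A B ⊆ 𝒞) : #(B \ A) ≤ RTD 𝒞 :=
  (card_sdiff_le_TDmin_Icc hAB).trans (TDmin_le_RTD_of_subset h)

end Teaching

/-! ### Connected sets and neighborhoods -/

section ConnectedSets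

variable {V : Type*} {G : SimpleGraph V} {A B : Finset V} {a b x : V}

lemma isConnSet_map_subtype_iff {s : Set V} {A : Finset s} :
    IsConnSet G (A.map (.subtype (· ∈ s))) ↔ IsConnSet (G.induce s) A := by
  let e : (A : Set s) ≃ (A.map (.subtype (· ∈ s)) : Set V) :=
    (Equiv.Set.image _ _ Subtype.val_injective).trans (Equiv.setCongr (by simp))
  let φ : (G.induce s).induce (A : Set s) ≃g G.induce (A.map (.subtype (· ∈ s)) : Set V) :=
    ⟨e, Iff.rfl⟩
  exact φ.connected_iff.symm

lemma IsConnSet.exists_subset_supp (hA : IsConnSet G A) :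
    ∃ c : G.ConnectedComponent, ∀ y ∈ A, y ∈ c.supp := by
  obtain ⟨x⟩ := hA.nonempty
  refine ⟨G.connectedComponentMk x, fun y hy => SimpleGraph.ConnectedComponent.sound ?_⟩
  exact (hA.preconnected ⟨y, hy⟩ x).map (SimpleGraph.Embedding.induce (A : Set V)).toHom

variable [Fintype V] [DecidableEq V]

lemma mem_Ccon : A ∈ Ccon G ↔ A = ∅ ∨ IsConnSet G A := by
  simp [Ccon]

lemma mem_openNbrSet : x ∈ openNbrSet G A ↔ x ∉ A ∧ ∃ a ∈ A, G.Adj a x := by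
  simp only [openNbrSet, closedNbrSet, closedNbr, nbrFinset, mem_sdiff, mem_biUnion, mem_insert,
    mem_filter, mem_univ, true_and]
  grind

lemma IsConnSet.insert_of_mem_openNbrSet (hA : IsConnSet G A) (ha : a ∈ openNbrSet G A) :
    IsConnSet G (insert a A) := by
  obtain ⟨-, b, hb, hba⟩ := mem_openNbrSet.1 ha
  have hunion : ((insert a A : Finset V) : Set V) = ↑A ∪ {b, a} := by
    ext y
    simp only [coe_insert, Set.mem_insert_iff, Set.mem_union, Set.mem_singleton_iff, mem_coe]
    grind
  rw [IsConnSet, hunion]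
  exact SimpleGraph.induce_union_connected hA.preconnected
    (SimpleGraph.induce_pair_connected_of_adj hba).preconnected ⟨b, hb, by simp⟩

lemma IsConnSet.subset_of_disjoint_openNbrSet (hB : IsConnSet G B) (hxA : x ∈ A) (hxB : x ∈ B)
    (hdisj : Disjoint B (openNbrSet G A)) : B ⊆ A := by
  intro y hy
  by_contra hyA
  obtain ⟨p⟩ := hB.preconnected ⟨x, hxB⟩ ⟨y, hy⟩
  obtain ⟨⟨⟨a, b⟩, hab⟩, -, ha, hb⟩ := p.exists_boundary_dart {w | w.1 ∈ A} hxA hyA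
  exact disjoint_left.1 hdisj b.2 (mem_openNbrSet.2 ⟨hb, a, ha, hab⟩)

lemma card_openNbrSet_le_card_openNbrSet_insert (ha : a ∈ openNbrSet G A) (hab : G.Adj a b)
    (hbA : b ∉ A) (hb : b ∉ openNbrSet G A) :
    #(openNbrSet G A) ≤ #(openNbrSet G (insert a A)) := by
  have hsub : insert b ((openNbrSet G A).erase a) ⊆ openNbrSet G (insert a A) := by
    intro y hy
    have hba : b ≠ a := hab.ne'
    simp only [mem_openNbrSet, mem_insert, mem_erase] at hy ⊢
    grind
  calc #(openNbrSet G A) = #(insert b ((openNbrSet G A).erase a)) := by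
        rw [card_insert_of_notMem (by simp [hb]), card_erase_add_one ha]
    _ ≤ #(openNbrSet G (insert a A)) := card_le_card hsub

lemma IsConnSet.exists_isConnSet_openNbrSet_eq_compl (hA : IsConnSet G A) (hG : G.Connected) :
    ∃ C, IsConnSet G C ∧ openNbrSet G C = Cᶜ ∧ #(openNbrSet G A) ≤ #Cᶜ := by
  obtain ⟨C, ⟨hC, hcard⟩, hmax⟩ :=
    (Set.toFinite {C | IsConnSet G C ∧ #(openNbrSet G A) ≤ #(openNbrSet G C)}).exists_maximal
      ⟨A, hA, le_rfl⟩
  suffices hdom : openNbrSet G C = Cᶜ from ⟨C, hC, hdom, hdom ▸ hcard⟩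
  refine Subset.antisymm (fun y hy => mem_compl.2 (mem_openNbrSet.1 hy).1) fun y hy => ?_
  by_contra hyN
  obtain ⟨x, hx⟩ := hC.nonempty
  obtain ⟨p⟩ := hG.preconnected x y
  obtain ⟨⟨⟨a, b⟩, hab⟩, -, ha, hb⟩ := p.exists_boundary_dart ↑(C ∪ openNbrSet G C)
    (mem_union_left _ hx) (by simpa [hyN] using hy)
  simp only [coe_union, Set.mem_union, mem_coe, not_or] at ha hb
  have haC : a ∉ C := fun haC => hb.2 (mem_openNbrSet.2 ⟨hb.1, a, haC, hab⟩)
  have haN : a ∈ openNbrSet G C := ha.resolve_left haC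
  have hins : insert a C ⊆ C := hmax
    ⟨hC.insert_of_mem_openNbrSet haN,
      hcard.trans (card_openNbrSet_le_card_openNbrSet_insert haN hab hb.1 hb.2)⟩
    (subset_insert a C)
  exact haC (hins (mem_insert_self a C))

end ConnectedSets

/-! ### Leaves of spanning trees -/

section Leaves

variable {W : Type*}

lemma isLeaf_iff_existsUnique_adj [Fintype W] {T : SimpleGraph W} {v : W} :
    IsLeaf T v ↔ ∃! w, T.Adj v w := by
  rw [← T.degree_eq_one_iff_existsUnique_adj, ← T.card_neighborFinset_eq_degree,
    T.neighborFinset_eq_filter, IsLeaf, deg]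

lemma isLeaf_of_forall_adj_eq [Fintype W] {T : SimpleGraph W} (hT : T.Preconnected) {u v : W}
    (huv : v ≠ u) (h : ∀ w, T.Adj v w → w = u) : IsLeaf T v := by
  have : Nontrivial W := ⟨v, u, huv⟩
  obtain ⟨w, hw⟩ := hT.exists_adj_of_nontrivial v
  exact isLeaf_iff_existsUnique_adj.2 ⟨w, hw, fun w' hw' => (h w' hw').trans (h w hw).symm⟩

/-- The graph `H[C]` with every vertex `v` outside `C` attached to it by the single edge `v — f v`.
The values of `f` on `C` are irrelevant. -/
def attachLeaves (H : SimpleGraph W) (C : Set W) (f : W → W) : SimpleGraph W :=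
  .fromRel fun a b => (a ∈ C ∧ b ∈ C ∧ H.Adj a b) ∨ (a ∉ C ∧ b = f a)

variable {H : SimpleGraph W} {C : Set W} {f : W → W}

lemma attachLeaves_le (hf : ∀ v ∉ C, H.Adj (f v) v) : attachLeaves H C f ≤ H := by
  rintro a b ⟨-, (⟨-, -, h⟩ | ⟨ha, rfl⟩) | (⟨-, -, h⟩ | ⟨hb, rfl⟩)⟩
  exacts [h, (hf a ha).symm, h.symm, hf b hb]

lemma eq_of_attachLeaves_adj (hf : ∀ v ∉ C, f v ∈ C) {v w : W} (hv : v ∉ C)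
    (h : (attachLeaves H C f).Adj v w) : w = f v := by
  obtain ⟨-, (⟨hvC, -⟩ | ⟨-, hw⟩) | (⟨-, hvC, -⟩ | ⟨hw, rfl⟩)⟩ := h
  exacts [absurd hvC hv, hw, absurd hvC hv, absurd (hf w hw) hv]

lemma attachLeaves_connected (hC : (H.induce C).Connected) (hf : ∀ v ∉ C, f v ∈ C) :
    (attachLeaves H C f).Connected := by
  let φ : H.induce C →g attachLeaves H C f :=
    ⟨Subtype.val, fun {a b} h => ⟨fun hab => h.ne (Subtype.ext hab), .inl (.inl ⟨a.2, b.2, h⟩)⟩⟩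
  obtain ⟨c⟩ := hC.nonempty
  have hreach_of_mem : ∀ v ∈ C, (attachLeaves H C f).Reachable v c :=
    fun v hv => (hC.preconnected ⟨v, hv⟩ c).map φ
  have hreach : ∀ v, (attachLeaves H C f).Reachable v c := by
    intro v
    by_cases hv : v ∈ C
    · exact hreach_of_mem v hv
    · have hadj : (attachLeaves H C f).Adj v (f v) :=
        ⟨fun h => hv (h ▸ hf v hv), .inl (.inr ⟨hv, rfl⟩)⟩
      exact hadj.reachable.trans (hreach_of_mem _ (hf v hv))
  exact SimpleGraph.connected_iff_exists_forall_reachable _ |>.2 ⟨c, fun v => (hreach v).symm⟩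

theorem exists_isTree_forall_notMem_isLeaf [Fintype W] (hC : (H.induce C).Connected)
    (hdom : ∀ v ∉ C, ∃ c ∈ C, H.Adj c v) : ∃ T ≤ H, T.IsTree ∧ ∀ v ∉ C, IsLeaf T v := by
  obtain ⟨c⟩ := hC.nonempty
  have : Nonempty W := ⟨c⟩
  choose! f hfC hfadj using hdom
  obtain ⟨T, hTle, hT⟩ := (attachLeaves_connected hC hfC).exists_isTree_le
  refine ⟨T, hTle.trans (attachLeaves_le hfadj), hT, fun v hv => ?_⟩
  exact isLeaf_of_forall_adj_eq hT.connected.preconnected (hfadj v hv).ne'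
    fun w hw => eq_of_attachLeaves_adj hfC hv (hTle hw)

variable [Fintype W] {T : SimpleGraph W} {A : Finset W}

lemma isConnSet_of_forall_notMem_isLeaf (hTH : T ≤ H) (hT : T.Preconnected) (hA : A.Nonempty)
    (hleaf : ∀ v ∉ A, IsLeaf T v) : IsConnSet H A := by
  have hpre : (T.induce (A : Set W)).Preconnected :=
    hT.induce_of_degree_eq_one fun v hv _ hx _ hy =>
      (isLeaf_iff_existsUnique_adj.1 (hleaf v hv)).unique hx hy
  have : Nonempty (A : Set W) := hA.to_subtype
  exact ⟨hpre.mono fun _ _ h => hTH h⟩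

lemma leafCount_le_ell (hTH : T ≤ H) (hT : T.IsTree) : leafCount T ≤ ell H := by
  refine le_csSup ⟨Fintype.card W, ?_⟩ ⟨T, hTH, hT, rfl⟩
  rintro k ⟨T, -, -, rfl⟩
  exact card_le_univ _

theorem IsConnSet.card_openNbrSet_le_ell [DecidableEq W] (hA : IsConnSet H A) (hH : H.Connected) :
    #(openNbrSet H A) ≤ ell H := by
  obtain ⟨C, hC, hdom, hcard⟩ := hA.exists_isConnSet_openNbrSet_eq_compl hH
  obtain ⟨T, hTH, hT, hleaf⟩ := exists_isTree_forall_notMem_isLeaf hC fun v hv =>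
    (mem_openNbrSet.1 (hdom ▸ mem_compl.2 hv)).2
  calc #(openNbrSet H A) ≤ #Cᶜ := hcard
    _ ≤ leafCount T := card_le_card fun v hv => by simpa using hleaf v (by simpa using hv)
    _ ≤ ell H := leafCount_le_ell hTH hT

end Leaves

/-! ### The class of connected sets -/

section Bounds

variable {V : Type*} [Fintype V] [DecidableEq V] {G : SimpleGraph V}

theorem leafCount_le_RTD_Ccon {s : Set V} [Fintype s] {T : SimpleGraph s} (hTG : T ≤ G.induce s)
    (hT : T.Preconnected) : leafCount T ≤ RTD (Ccon G) := by
  let ι : s ↪ V := .subtype (· ∈ s)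
  let leaves : Finset s := univ.filter (IsLeaf T)
  have hinterval : Icc (leavesᶜ.map ι) (univ.map ι) ⊆ Ccon G := by
    intro A hA
    obtain ⟨hinner, hAs⟩ := mem_Icc.1 hA
    obtain ⟨A, -, rfl⟩ := subset_map_iff.1 hAs
    rcases A.eq_empty_or_nonempty with rfl | hne
    · simp [mem_Ccon]
    · refine mem_Ccon.2 (.inr (isConnSet_map_subtype_iff.2
        (isConnSet_of_forall_notMem_isLeaf hTG hT hne fun v hv => ?_)))
      by_contra hv'
      exact hv (map_subset_map.1 hinner (by simpa [leaves] using hv'))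
  calc leafCount T = #(univ.map ι \ leavesᶜ.map ι) := by
        rw [← Finset.map_sdiff, card_map, ← compl_eq_univ_sdiff, compl_compl, leafCount]
    _ ≤ RTD (Ccon G) :=
        card_sdiff_le_RTD_of_Icc_subset (map_subset_map.2 (subset_univ _)) hinterval

theorem ellGen_le_RTD_Ccon (G : SimpleGraph V) : ellGen G ≤ RTD (Ccon G) := by
  refine csSup_le' ?_
  rintro _ ⟨c, rfl⟩
  refine csSup_le' ?_
  rintro _ ⟨T, hTG, hT, rfl⟩
  exact leafCount_le_RTD_Ccon hTG hT.connected.preconnected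

lemma ell_induce_supp_le_ellGen (c : G.ConnectedComponent) : ell (G.induce c.supp) ≤ ellGen G :=
  le_csSup (Set.finite_range fun c : G.ConnectedComponent => ell (G.induce c.supp)).bddAbove
    ⟨c, rfl⟩

lemma openNbrSet_map_subtype_supp (c : G.ConnectedComponent) [DecidableEq c.supp]
    (A : Finset c.supp) :
    openNbrSet G (A.map (.subtype (· ∈ c.supp))) =
      (openNbrSet (G.induce c.supp) A).map (.subtype (· ∈ c.supp)) := by
  ext y
  simp only [mem_openNbrSet, mem_map]
  constructor
  · rintro ⟨hyA, _, ⟨a, ha, rfl⟩, hay⟩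
    have hyc : y ∈ c.supp := c.mem_supp_of_adj_mem_supp a.2 hay
    exact ⟨⟨y, hyc⟩, ⟨fun hy => hyA ⟨_, hy, rfl⟩, a, ha, hay⟩, rfl⟩
  · rintro ⟨y, ⟨hyA, a, ha, hay⟩, rfl⟩
    exact ⟨fun ⟨_, hz, hzy⟩ => hyA (Subtype.ext hzy ▸ hz), a, ⟨a, ha, rfl⟩, hay⟩

theorem IsConnSet.card_openNbrSet_le_ellGen {A : Finset V} (hA : IsConnSet G A) :
    #(openNbrSet G A) ≤ ellGen G := by
  obtain ⟨c, hAc⟩ := hA.exists_subset_supp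
  obtain ⟨A, rfl⟩ : ∃ A' : Finset c.supp, A'.map (.subtype (· ∈ c.supp)) = A :=
    ⟨A.subtype (· ∈ c.supp), subtype_map_of_mem hAc⟩
  rw [openNbrSet_map_subtype_supp, card_map]
  exact ((isConnSet_map_subtype_iff.1 hA).card_openNbrSet_le_ell c.connected_toSimpleGraph).trans
    (ell_induce_supp_le_ellGen c)

lemma isTeachingSet_insert_openNbrSet {𝒟 : Finset (Finset V)} (h𝒟 : 𝒟 ⊆ Ccon G) {A : Finset V}
    (hA : Minimal (fun B => B ∈ 𝒟 ∧ B.Nonempty) A) {x : V} (hx : x ∈ A) :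
    IsTeachingSet 𝒟 A (insert x (openNbrSet G A)) := by
  intro B hB hne
  by_contra hagree
  push Not at hagree
  have hxB : x ∈ B := (hagree x (mem_insert_self _ _)).2 hx
  have hBconn : IsConnSet G B := (mem_Ccon.1 (h𝒟 hB)).resolve_left (ne_empty_of_mem hxB)
  have hBA : B ⊆ A := hBconn.subset_of_disjoint_openNbrSet hx hxB <| disjoint_left.2
    fun y hyB hyN => (mem_openNbrSet.1 hyN).1 ((hagree y (mem_insert_of_mem hyN)).1 hyB)
  exact hne (hA.eq_of_le ⟨hB, x, hxB⟩ hBA)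

lemma TDmin_le_ellGen_add_one_of_subset_Ccon {𝒟 : Finset (Finset V)} (h𝒟 : 𝒟 ⊆ Ccon G) :
    TDmin 𝒟 ≤ ellGen G + 1 := by
  by_cases hex : ∃ A ∈ 𝒟, A.Nonempty
  · obtain ⟨A, hA⟩ := (Set.toFinite {A | A ∈ 𝒟 ∧ A.Nonempty}).exists_minimal hex
    obtain ⟨hA𝒟, x, hx⟩ := hA.prop
    have hAconn : IsConnSet G A := (mem_Ccon.1 (h𝒟 hA𝒟)).resolve_left (ne_empty_of_mem hx)
    calc TDmin 𝒟 ≤ TD 𝒟 A := TDmin_le_TD hA𝒟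
      _ ≤ #(insert x (openNbrSet G A)) := (isTeachingSet_insert_openNbrSet h𝒟 hA hx).TD_le
      _ ≤ #(openNbrSet G A) + 1 := card_insert_le _ _
      _ ≤ ellGen G + 1 := Nat.succ_le_succ hAconn.card_openNbrSet_le_ellGen
  · push Not at hex
    have hsub : (𝒟 : Set (Finset V)).Subsingleton := fun A hA B hB =>
      (hex A hA).trans (hex B hB).symm
    simp [TDmin_eq_zero_of_subsingleton hsub]

theorem RTD_Ccon_le_ellGen_add_one (G : SimpleGraph V) : RTD (Ccon G) ≤ ellGen G + 1 :=
  RTD_le_of_forall_TDmin_le fun _ => TDmin_le_ellGen_add_one_of_subset_Ccon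

end Bounds

theorem con_rtd_bounds_general_general {V : Type*} [Fintype V] [DecidableEq V]
    (G : SimpleGraph V) :
    ellGen G ≤ RTD (Ccon G) ∧ RTD (Ccon G) ≤ ellGen G + 1 :=
  ⟨ellGen_le_RTD_Ccon G, RTD_Ccon_le_ellGen_add_one G⟩

/-- For every finite simple graph `G` each of whose connected
components has at least two vertices, `ℓ(G) ≤ RTD(C_con(G)) ≤ ℓ(G) + 1`, where
`ℓ(G)` is the maximum of `ℓ` over the connected components of `G`. -/
theorem con_rtd_bounds_general {V : Type*} [Fintype V] [DecidableEq V]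
    (G : SimpleGraph V)
    (hcomp : ∀ c : G.ConnectedComponent, ∃ x y : V, x ∈ c.supp ∧ y ∈ c.supp ∧ x ≠ y) :
    ellGen G ≤ RTD (Ccon G) ∧ RTD (Ccon G) ≤ ellGen G + 1 := by
  exact con_rtd_bounds_general_general G
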